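/- arXiv:1907.05658 — 2 statements merged into one kernel-verified Lean document; each statement's English description precedes it below -/
import Mathlib

section
/- Let f : ℝ → ℂ be analytic and suppose there exist N ∈ ℕ, N ≥ 1, and coefficients a_0, …, a_N ∈ ℂ with a_0 ≠ 0 and a_N ≠ 0 such that Σ_{ℓ=0}^N a_ℓ · f(t+ℓ) = 0 for all t ∈ ℝ. Then there exist s ∈ ℕ, complex numbers λ_1, …, λ_s pairwise distinct modulo 2πi, integers d_1, …, d_s ∈ ℕ₀ with Σ_{j=1}^s (d_j+1) ≤ N, and 1-periodic analytic functions π_{j,k} : ℝ → ℂ (0 ≤ k ≤ d_j) such that f(t) = Σ_{j=1}^s e^{λ_j t} Σ_{k=0}^{d_j} π_{j,k}(t)·t^k for all t ∈ ℝ. -/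
/-!
Let `E` be the shift `(E f)(t) = f (t + 1)` and `p = Σ a_ℓ X^ℓ`, so that the equation reads
`p(E) f = 0`. A Bézout identity for the coprime factors `(X - μ)^m` of `p` splits `f` into a sum of
generalized eigenvectors of `E`, each of which is a polynomial in `E` applied to `f`. Since
`a_0 ≠ 0`, every root is `μ = e^λ` for some `λ`; conjugating by `e^{λt}` turns `E - μ` into `μ Δ`,
where `Δ` is the forward difference, so that each component is `e^{λt} g` with `Δ^m g = 0`. Such a
`g` is a polynomial of degree `< m` in `t` with periodic coefficients: its leading coefficient is
`Δ^(m-1) g / (m-1)!`.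

Analyticity enters only through closure properties, so the argument applies to any shift-stable
algebra of functions containing `t` and the exponentials `e^{ct}`.
-/

open Polynomial Function
open scoped fwdDiff

lemma fwdDiff_iter_comp_addMonoidHom {M M' G : Type*} [AddCommMonoid M] [AddCommMonoid M']
    [AddCommGroup G] (φ : M →+ M') (h : M) (f : M' → G) (n : ℕ) :
    Δ_[h] ^[n] (f ∘ φ) = Δ_[φ h] ^[n] f ∘ φ := by
  have comm : Semiconj (fun g : M' → G ↦ g ∘ φ) Δ_[φ h] Δ_[h] := fun g ↦ by
    funext x; simp [fwdDiff]
  exact ((comm.iterate_right n).eq f).symm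

lemma fwdDiff_iter_map_pow_eq_factorial {R S : Type*} [CommRing R] [CommRing S] (φ : R →+* S)
    (n : ℕ) : Δ_[1] ^[n] (fun x ↦ φ x ^ n) = fun _ ↦ (n.factorial : S) := by
  have comp := fwdDiff_iter_comp_addMonoidHom φ.toAddMonoidHom 1 (fun y : S ↦ y ^ n) n
  simp only [RingHom.toAddMonoidHom_eq_coe, AddMonoidHom.coe_coe, map_one,
    fwdDiff_iter_eq_factorial] at comp
  exact comp

lemma fwdDiff_iter_mul_of_periodic {M R : Type*} [AddCommMonoid M] [Ring R] {h : M} {c : M → R}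
    (hc : Periodic c h) (g : M → R) (n : ℕ) : Δ_[h] ^[n] (c * g) = c * Δ_[h] ^[n] g := by
  have comm : Semiconj (c * ·) Δ_[h] Δ_[h] := fun g ↦ by
    funext x; simp [fwdDiff, hc x, mul_sub]
  exact ((comm.iterate_right n).eq g).symm

lemma exists_periodic_coeff_of_fwdDiff_iter_eq_zero {R K : Type*} [CommRing R] [Field K]
    [CharZero K] (φ : R →+* K) {A : Subalgebra K (R → K)}
    (hshift : ∀ g ∈ A, (fun x ↦ g (x + 1)) ∈ A) (hφ : (φ : R → K) ∈ A) (m : ℕ) :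
    ∀ g ∈ A, Δ_[1] ^[m] g = 0 → ∃ c : ℕ → R → K, (∀ k, Periodic (c k) 1 ∧ c k ∈ A) ∧
      ∀ x, g x = ∑ k ∈ Finset.range m, c k x * φ x ^ k := by
  induction m with
  | zero =>
    intro g _ hg
    exact ⟨0, fun _ ↦ ⟨fun _ ↦ rfl, zero_mem A⟩, fun x ↦ by simpa using congrFun hg x⟩
  | succ m ih =>
    intro g hgA hg
    set u : R → K := (m.factorial : K)⁻¹ • Δ_[1] ^[m] g with hu
    have hΔ : Set.MapsTo (fwdDiff (1 : R)) (A : Set (R → K)) A :=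
      fun f hf ↦ sub_mem (hshift f hf) hf
    have huA : u ∈ A := A.smul_mem (hΔ.iterate m hgA) _
    have hu_per : Periodic u 1 := fun x ↦ by
      have hx : Δ_[1] (Δ_[1] ^[m] g) x = 0 := by
        rw [← iterate_succ_apply' (fwdDiff (1 : R)), hg, Pi.zero_apply]
      simp only [hu, Pi.smul_apply, sub_eq_zero.1 hx]
    have hlead : Δ_[1] ^[m] (u * fun x ↦ φ x ^ m) = Δ_[1] ^[m] g := by
      rw [fwdDiff_iter_mul_of_periodic hu_per, fwdDiff_iter_map_pow_eq_factorial]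
      funext x
      simp [hu, mul_right_comm, Nat.factorial_ne_zero]
    obtain ⟨c, hc, hgc⟩ := ih (g - u * fun x ↦ φ x ^ m)
      (sub_mem hgA (mul_mem huA (pow_mem hφ m))) (by
        have hadd := fwdDiff_iter_add 1 (g - u * fun x ↦ φ x ^ m) (u * fun x ↦ φ x ^ m) m
        rwa [sub_add_cancel, hlead, right_eq_add] at hadd)
    refine ⟨update c m u, fun k ↦ ?_, fun x ↦ ?_⟩
    · obtain rfl | hk := eq_or_ne k m
      · simpa using ⟨hu_per, huA⟩
      · simpa [hk] using hc k
    · rw [Finset.sum_range_succ, update_self, ← sub_eq_iff_eq_add]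
      refine (hgc x).trans (Finset.sum_congr rfl fun k hk ↦ ?_)
      rw [update_of_ne (Finset.mem_range.1 hk).ne]

lemma exists_sum_eq_of_aeval_prod_eq_zero {R M ι : Type*} [CommRing R] [AddCommGroup M]
    [Module R M] {T : Module.End R M} {W : Submodule R M} (hW : W ≤ W.comap T) {s : Finset ι}
    {q : ι → R[X]} (hq : Pairwise (IsCoprime on fun i : s ↦ q i)) {x : M} (hx : x ∈ W)
    (hTx : aeval T (∏ i ∈ s, q i) x = 0) :
    ∃ y : ι → M, (∀ i ∈ s, y i ∈ W ∧ aeval T (q i) (y i) = 0) ∧ ∑ i ∈ s, y i = x := by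
  classical
  obtain rfl | hs := s.eq_empty_or_nonempty
  · exact ⟨0, by simp, by simpa using hTx.symm⟩
  obtain ⟨b, hb⟩ := (exists_sum_eq_one_iff_pairwise_coprime hs).2 hq
  refine ⟨fun i ↦ aeval T (b i * ∏ j ∈ s \ {i}, q j) x,
    fun i hi ↦ ⟨aeval_apply_smul_mem_of_le_comap hx _ _ hW, ?_⟩, ?_⟩
  · rw [← Module.End.mul_apply, ← map_mul, mul_left_comm,
      ← Finset.prod_eq_mul_prod_sdiff_singleton_of_mem hi, map_mul, Module.End.mul_apply, hTx,
      map_zero]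
  · rw [← LinearMap.sum_apply, ← map_sum, hb, map_one, Module.End.one_apply]

lemma exists_sum_genEigenspace_of_aeval_eq_zero {K V : Type*} [Field K] [DecidableEq K]
    [AddCommGroup V] [Module K V] (T : Module.End K V) {W : Submodule K V} (hW : W ≤ W.comap T)
    {p : K[X]} (hsplits : p.Splits) (hp : p ≠ 0) {x : V} (hx : x ∈ W) (hTx : aeval T p x = 0) :
    ∃ y : K → V, (∀ μ ∈ p.roots.toFinset,
      y μ ∈ W ∧ y μ ∈ T.genEigenspace μ (p.rootMultiplicity μ)) ∧
      ∑ μ ∈ p.roots.toFinset, y μ = x := by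
  have hprod : aeval T (∏ μ ∈ p.roots.toFinset, (X - C μ) ^ p.rootMultiplicity μ) x = 0 := by
    rw [hsplits.eq_prod_roots, Finset.prod_multiset_map_count, map_mul, aeval_C,
      Module.End.mul_apply, Module.algebraMap_end_apply] at hTx
    simpa [hp] using hTx
  have hcoprime : Pairwise (IsCoprime on
      fun μ : p.roots.toFinset ↦ (X - C (μ : K)) ^ p.rootMultiplicity (μ : K)) :=
    fun _ _ hne ↦ (pairwise_coprime_X_sub_C Subtype.val_injective hne).pow
  obtain ⟨y, hy, hsum⟩ := exists_sum_eq_of_aeval_prod_eq_zero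
    (q := fun μ ↦ (X - C μ) ^ p.rootMultiplicity μ) hW hcoprime hx hprod
  refine ⟨y, fun μ hμ ↦ ⟨(hy μ hμ).1, ?_⟩, hsum⟩
  rw [Module.End.mem_genEigenspace_nat, LinearMap.mem_ker, ← Algebra.algebraMap_eq_smul_one]
  simpa using (hy μ hμ).2

lemma ne_zero_of_mem_roots_toFinset {R : Type*} [CommRing R] [IsDomain R] [DecidableEq R]
    {p : R[X]} (hp : p.coeff 0 ≠ 0) {μ : R} (hμ : μ ∈ p.roots.toFinset) : μ ≠ 0 := by
  rintro rfl
  rw [Multiset.mem_toFinset] at hμ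
  exact hp (by rw [coeff_zero_eq_eval_zero, isRoot_of_mem_roots hμ])

lemma sum_rootMultiplicity_le_natDegree {R : Type*} [CommRing R] [IsDomain R] [DecidableEq R]
    (p : R[X]) : ∑ μ ∈ p.roots.toFinset, p.rootMultiplicity μ ≤ p.natDegree := by
  simp only [← count_roots, Multiset.toFinset_sum_count_eq]
  exact card_roots' p

section Shift

/-- The shift `f ↦ f (· + h)` as a `K`-linear operator on `K`-valued functions; Mathlib's `shiftₗ`
is only `ℤ`-linear, which is not enough to speak of its eigenvalues in `K`. -/
def shiftEnd (K : Type*) {M : Type*} [CommRing K] [Add M] (h : M) : Module.End K (M → K) :=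
  LinearMap.funLeft K K (· + h)

variable {K M : Type*} [CommRing K] [AddCommMonoid M] {h : M}

lemma shiftEnd_apply (f : M → K) (x : M) : shiftEnd K h f x = f (x + h) := rfl

lemma shiftEnd_pow_apply (n : ℕ) (f : M → K) (x : M) :
    (shiftEnd K h ^ n) f x = f (x + n • h) := by
  induction n generalizing x with
  | zero => simp
  | succ n ih =>
    rw [pow_succ', Module.End.mul_apply, shiftEnd_apply, ih, add_assoc, succ_nsmul']

lemma shiftEnd_sub_smul_pow_mul {e : M → K} {μ : K} (he : ∀ x, e (x + h) = μ * e x) (n : ℕ)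
    (g : M → K) : ((shiftEnd K h - μ • 1) ^ n) (e * g) = μ ^ n • (e * Δ_[h] ^[n] g) := by
  induction n with
  | zero => simp
  | succ n ih =>
    rw [pow_succ', Module.End.mul_apply, ih, iterate_succ_apply']
    funext x
    simp only [LinearMap.sub_apply, LinearMap.smul_apply, Module.End.one_apply, shiftEnd_apply,
      Pi.sub_apply, Pi.smul_apply, Pi.mul_apply, smul_eq_mul, he, fwdDiff]
    ring

end Shift

lemma log_sub_log_ne_two_pi_I_mul_int {z w : ℂ} (hz : z ≠ 0) (hw : w ≠ 0) (hzw : z ≠ w) (k : ℤ) :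
    Complex.log z - Complex.log w ≠ 2 * Real.pi * Complex.I * k := by
  intro hk
  apply hzw
  rw [← Complex.exp_log hz, ← Complex.exp_log hw, Complex.exp_eq_exp_iff_exists_int]
  exact ⟨k, by linear_combination hk⟩

section FunctionAlgebra

variable {A : Subalgebra ℂ (ℝ → ℂ)}

lemma exists_periodic_coeff_of_mem_genEigenspace
    (hshift : ∀ g ∈ A, (fun t ↦ g (t + 1)) ∈ A) (hid : (fun t : ℝ ↦ (t : ℂ)) ∈ A)
    (hexp : ∀ c : ℂ, (fun t : ℝ ↦ Complex.exp (c * t)) ∈ A) (l : ℂ) (m : ℕ) {f : ℝ → ℂ}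
    (hfA : f ∈ A) (hf : f ∈ (shiftEnd ℂ (1 : ℝ)).genEigenspace (Complex.exp l) m) :
    ∃ c : ℕ → ℝ → ℂ, (∀ k, Periodic (c k) 1 ∧ c k ∈ A) ∧
      ∀ t : ℝ, f t = Complex.exp (l * t) * ∑ k ∈ Finset.range m, c k t * (t : ℂ) ^ k := by
  set e : ℝ → ℂ := fun t ↦ Complex.exp (l * t) with he
  set g : ℝ → ℂ := (fun t : ℝ ↦ Complex.exp (-l * t)) * f with hg
  have he_shift (t : ℝ) : e (t + 1) = Complex.exp l * e t := by
    simp only [he, ← Complex.exp_add]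
    push_cast
    ring_nf
  have hfg : f = e * g := by
    funext t
    simp [he, hg, ← mul_assoc, ← Complex.exp_add]
  have hΔg : Δ_[1] ^[m] g = 0 := by
    rw [Module.End.mem_genEigenspace_nat, LinearMap.mem_ker, hfg,
      shiftEnd_sub_smul_pow_mul he_shift] at hf
    funext t
    simpa [he, Complex.exp_ne_zero] using congrFun hf t
  obtain ⟨c, hc, hgc⟩ := exists_periodic_coeff_of_fwdDiff_iter_eq_zero Complex.ofRealHom
    hshift hid m g (mul_mem (hexp (-l)) hfA) hΔg
  exact ⟨c, hc, fun t ↦ by rw [hfg, Pi.mul_apply, hgc]; rfl⟩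

lemma exists_periodic_coeff_of_aeval_shiftEnd_eq_zero
    (hshift : ∀ g ∈ A, (fun t ↦ g (t + 1)) ∈ A) (hid : (fun t : ℝ ↦ (t : ℂ)) ∈ A)
    (hexp : ∀ c : ℂ, (fun t : ℝ ↦ Complex.exp (c * t)) ∈ A) {p : ℂ[X]} (hp : p.coeff 0 ≠ 0)
    {f : ℝ → ℂ} (hfA : f ∈ A) (hf : aeval (shiftEnd ℂ (1 : ℝ)) p f = 0) :
    ∃ c : p.roots.toFinset → ℕ → ℝ → ℂ, (∀ μ k, Periodic (c μ k) 1 ∧ c μ k ∈ A) ∧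
      ∀ t : ℝ, f t = ∑ μ : p.roots.toFinset, Complex.exp (Complex.log μ * t) *
        ∑ k ∈ Finset.range (p.rootMultiplicity (μ : ℂ)), c μ k t * (t : ℂ) ^ k := by
  have hp0 : p ≠ 0 := by rintro rfl; simp at hp
  obtain ⟨y, hy, hsum⟩ := exists_sum_genEigenspace_of_aeval_eq_zero
    (shiftEnd ℂ (1 : ℝ)) (W := Subalgebra.toSubmodule A) hshift (IsAlgClosed.splits p) hp0 hfA hf
  choose c hc hyc using fun μ : p.roots.toFinset ↦
    exists_periodic_coeff_of_mem_genEigenspace hshift hid hexp (Complex.log μ) _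
      (hy μ μ.2).1 (by
        rw [Complex.exp_log (ne_zero_of_mem_roots_toFinset hp μ.2)]
        exact (hy μ μ.2).2)
  refine ⟨c, hc, fun t ↦ ?_⟩
  simp only [← hyc]
  rw [← hsum, Finset.sum_apply, Finset.sum_coe_sort _ fun μ ↦ y μ t]

theorem stmt_5_general {A : Subalgebra ℂ (ℝ → ℂ)}
    (hshift : ∀ g ∈ A, (fun t ↦ g (t + 1)) ∈ A) (hid : (fun t : ℝ ↦ (t : ℂ)) ∈ A)
    (hexp : ∀ c : ℂ, (fun t : ℝ ↦ Complex.exp (c * t)) ∈ A) {f : ℝ → ℂ} (hf : f ∈ A)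
    (N : ℕ) (a : ℕ → ℂ) (ha0 : a 0 ≠ 0)
    (heq : ∀ t : ℝ, ∑ ℓ ∈ Finset.range (N + 1), a ℓ * f (t + ℓ) = 0) :
    ∃ (s : ℕ) (lam : Fin s → ℂ) (d : Fin s → ℕ) (π : Fin s → ℕ → ℝ → ℂ),
      (∀ j m : Fin s, j ≠ m → ∀ k : ℤ, lam j - lam m ≠ 2 * Real.pi * Complex.I * k) ∧
      (∑ j : Fin s, (d j + 1)) ≤ N ∧
      (∀ j : Fin s, ∀ k ≤ d j, (∀ t : ℝ, π j k (t + 1) = π j k t) ∧ π j k ∈ A) ∧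
      ∀ t : ℝ, f t = ∑ j : Fin s, Complex.exp (lam j * (t : ℂ)) *
        ∑ k ∈ Finset.range (d j + 1), π j k t * (t : ℂ) ^ k := by
  set p : ℂ[X] := ∑ ℓ ∈ Finset.range (N + 1), C (a ℓ) * X ^ ℓ with hp
  have hp_coeff : p.coeff 0 ≠ 0 := by simpa [hp, coeff_X_pow] using ha0
  have hp_deg : p.natDegree ≤ N := natDegree_sum_le_of_forall_le _ _ fun ℓ hℓ ↦
    (natDegree_C_mul_X_pow_le _ _).trans (Finset.mem_range_succ_iff.1 hℓ)
  have hpf : aeval (shiftEnd ℂ (1 : ℝ)) p f = 0 := funext fun t ↦ by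
    simpa [hp, shiftEnd_pow_apply] using heq t
  obtain ⟨c, hc, hfc⟩ :=
    exists_periodic_coeff_of_aeval_shiftEnd_eq_zero hshift hid hexp hp_coeff hf hpf
  have hmult (μ : p.roots.toFinset) :
      p.rootMultiplicity (μ : ℂ) - 1 + 1 = p.rootMultiplicity (μ : ℂ) := Nat.sub_add_cancel <| by
    simpa only [← count_roots, Multiset.one_le_count_iff_mem, Multiset.mem_toFinset] using μ.2
  let e := p.roots.toFinset.equivFin.symm
  refine ⟨_, fun j ↦ Complex.log (e j), fun j ↦ p.rootMultiplicity (e j : ℂ) - 1, fun j ↦ c (e j),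
    fun j m hjm ↦ ?_, ?_, fun j k _ ↦ hc (e j) k, fun t ↦ ?_⟩
  · exact log_sub_log_ne_two_pi_I_mul_int (ne_zero_of_mem_roots_toFinset hp_coeff (e j).2)
      (ne_zero_of_mem_roots_toFinset hp_coeff (e m).2)
      (Subtype.val_injective.ne (e.injective.ne hjm))
  · simp only [hmult]
    rw [e.sum_comp fun μ ↦ p.rootMultiplicity (μ : ℂ), Finset.sum_coe_sort _ p.rootMultiplicity]
    exact (sum_rootMultiplicity_le_natDegree p).trans hp_deg
  · simp only [hmult]
    rw [hfc, e.sum_comp fun μ ↦ Complex.exp (Complex.log μ * t) *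
      ∑ k ∈ Finset.range (p.rootMultiplicity (μ : ℂ)), c μ k t * (t : ℂ) ^ k]

end FunctionAlgebra

/-- The real-analytic functions `ℝ → ℂ`, as a subalgebra of all functions. -/
def analyticSubalgebra : Subalgebra ℂ (ℝ → ℂ) where
  carrier := {f | ∀ x, AnalyticAt ℝ f x}
  mul_mem' hf hg x := (hf x).mul (hg x)
  add_mem' hf hg x := (hf x).add (hg x)
  algebraMap_mem' _ _ := analyticAt_const

lemma shift_mem_analyticSubalgebra {g : ℝ → ℂ} (hg : g ∈ analyticSubalgebra) :
    (fun t ↦ g (t + 1)) ∈ analyticSubalgebra :=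
  fun x ↦ (hg (x + 1)).fun_comp (f := (· + 1)) (analyticAt_id.add analyticAt_const)

lemma ofReal_mem_analyticSubalgebra : (fun t : ℝ ↦ (t : ℂ)) ∈ analyticSubalgebra :=
  Complex.ofRealCLM.analyticAt

lemma cexp_mul_mem_analyticSubalgebra (c : ℂ) :
    (fun t : ℝ ↦ Complex.exp (c * t)) ∈ analyticSubalgebra := fun x ↦
  (analyticAt_cexp.restrictScalars (𝕜 := ℝ)).fun_comp (f := fun t : ℝ ↦ c * t)
    (analyticAt_const.mul (ofReal_mem_analyticSubalgebra x))

/-- If an analytic `f : ℝ → ℂ` satisfies a nontrivial linear difference equation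
`Σ_{ℓ=0}^N a_ℓ·f(t+ℓ) = 0` with `a_0 ≠ 0`, `a_N ≠ 0`, then
`f(t) = Σ_{j=1}^s e^{λ_j t} Σ_{k=0}^{d_j} π_{j,k}(t)·t^k` with `λ_j` pairwise distinct modulo
`2πi`, `Σ_j (d_j+1) ≤ N`, and 1-periodic analytic functions `π_{j,k}`. -/
theorem stmt_5 (f : ℝ → ℂ) (hf : ∀ x : ℝ, AnalyticAt ℝ f x)
    (N : ℕ) (hN : 1 ≤ N) (a : ℕ → ℂ) (ha0 : a 0 ≠ 0) (haN : a N ≠ 0)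
    (heq : ∀ t : ℝ, ∑ ℓ ∈ Finset.range (N + 1), a ℓ * f (t + ℓ) = 0) :
    ∃ (s : ℕ) (lam : Fin s → ℂ) (d : Fin s → ℕ) (π : Fin s → ℕ → ℝ → ℂ),
      (∀ j m : Fin s, j ≠ m → ∀ k : ℤ, lam j - lam m ≠ 2 * Real.pi * Complex.I * k) ∧
      (∑ j : Fin s, (d j + 1)) ≤ N ∧
      (∀ j : Fin s, ∀ k ≤ d j,
        (∀ t : ℝ, π j k (t + 1) = π j k t) ∧ (∀ x : ℝ, AnalyticAt ℝ (π j k) x)) ∧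
      ∀ t : ℝ, f t = ∑ j : Fin s, Complex.exp (lam j * (t : ℂ)) *
        ∑ k ∈ Finset.range (d j + 1), π j k t * (t : ℂ) ^ k := by
  exact stmt_5_general (A := analyticSubalgebra) (fun _ ↦ shift_mem_analyticSubalgebra)
    ofReal_mem_analyticSubalgebra cexp_mul_mem_analyticSubalgebra hf N a ha0 heq
end

section
/- Let φ : ℝ → ℂ be continuous, integrable and compactly supported, let λ ∈ ℂ and d ∈ ℕ₀, and suppose there exist C > 0 and q ∈ (0,1) such that |φ̂^{(k)}(−iλ/(2π) + ℓ)| ≤ C·q^{|ℓ|} for all ℓ ∈ ℤ and all k = 0, …, d. For k = 0, …, d define ω_k(t) = Σ_{ℓ∈ℤ} (t−ℓ)^k · e^{−λ(t−ℓ)} · φ(t−ℓ). Then each ω_k is 1-periodic and analytic on ℝ, and for every k = 0, …, d and every t ∈ ℝ, Σ_{ℓ∈ℤ} e^{λℓ}·ℓ^k·φ(t−ℓ) = e^{λt} Σ_{j=0}^k C(k,j)·t^{k−j}·(−1)^j·ω_j(t), where C(k,j) is the binomial coefficient. In particular, for every polynomial p of degree at most d, the function t ↦ Σ_{ℓ∈ℤ}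 e^{λℓ}·p(ℓ)·φ(t−ℓ) is an analytic function belonging to V_φ. -/
open MeasureTheory

/-- The Fourier transform of `φ`, analytically extended to `ℂ`:
`φ̂(z) = ∫_ℝ φ(x)·e^{−2πi x z} dx`. -/
noncomputable def fourierExt (φ : ℝ → ℂ) (z : ℂ) : ℂ :=
  ∫ x : ℝ, φ x * Complex.exp (-(2 * (Real.pi : ℂ) * Complex.I * (x : ℂ) * z))

/-- `ω_k(t) = Σ_{ℓ∈ℤ} (t−ℓ)^k·e^{−λ(t−ℓ)}·φ(t−ℓ)`. -/
noncomputable def omegaFun (φ : ℝ → ℂ) (lam : ℂ) (k : ℕ) (t : ℝ) : ℂ :=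
  ∑' ℓ : ℤ, ((t : ℂ) - (ℓ : ℂ)) ^ k * Complex.exp (-lam * ((t : ℂ) - (ℓ : ℂ))) * φ (t - (ℓ : ℝ))

/-! Put `g x = x ^ k * exp (-λ x) * φ x`, so that `ω_k` is the periodization `t ↦ ∑ g (t - ℓ)`.
Differentiating under the integral sign identifies `φ̂^{(k)}(-iλ/(2π) + n)` with
`(-2πi)^k 𝓕 g n`. By Poisson summation the Fourier coefficients of `ω_k` are therefore
exponentially small, so its Fourier series converges on a strip around `ℝ` and `ω_k` is analytic.
Expanding `ℓ ^ k = (t - (t - ℓ)) ^ k` binomially expresses the exponential-polynomial sums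
through the `ω_j`, from which they inherit analyticity.
-/

open scoped FourierTransform Real Topology

section Series

lemma summable_pow_natAbs {K : Type*} [NormedDivisionRing K] [CompleteSpace K] {r : K}
    (hr : ‖r‖ < 1) : Summable fun n : ℤ => r ^ n.natAbs := by
  apply Summable.of_nat_of_neg <;> simpa using summable_geometric_of_norm_lt_one hr

lemma summable_mul_comp_sub_intCast {R : Type*} [NonUnitalNonAssocSemiring R]
    [TopologicalSpace R] {f : ℝ → R} (hf : HasCompactSupport f) (a : ℤ → R) (t : ℝ) :
    Summable fun ℓ : ℤ => a ℓ * f (t - ℓ) := by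
  have hemb : Topology.IsClosedEmbedding fun ℓ : ℤ => t - (ℓ : ℝ) :=
    (Homeomorph.subLeft t).isClosedEmbedding.comp Int.isClosedEmbedding_coe_real
  have hfin : (Function.support fun ℓ : ℤ => f (t - ℓ)).Finite :=
    (hf.comp_isClosedEmbedding hemb).isCompact.finite_of_discrete.subset (subset_tsupport _)
  exact summable_of_hasFiniteSupport (hfin.subset (Function.support_mul_subset_right _ _))

lemma periodic_tsum_comp_sub_intCast {M : Type*} [AddCommMonoid M] [TopologicalSpace M]
    (f : ℝ → M) : Function.Periodic (fun t => ∑' ℓ : ℤ, f (t - ℓ)) 1 := fun t => by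
  beta_reduce
  rw [← (Equiv.addRight (1 : ℤ)).tsum_eq]
  simp only [Equiv.coe_addRight, Int.cast_add, Int.cast_one, add_sub_add_right_eq_sub]

end Series

section FourierSeries

variable {E : Type*} [NormedAddCommGroup E] [NormedSpace ℂ E]

lemma norm_cexp_intCast_mul_le (n : ℤ) (z : ℂ) :
    ‖Complex.exp (n * z)‖ ≤ Real.exp |z.re| ^ n.natAbs := by
  rw [Complex.norm_exp, ← Real.exp_nat_mul, Real.exp_le_exp, Nat.cast_natAbs, Int.cast_abs,
    ← abs_mul, ← Complex.ofReal_intCast, Complex.re_ofReal_mul]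
  exact le_abs_self _

variable [CompleteSpace E] {c : ℤ → E} {C q : ℝ}

lemma analyticAt_tsum_cexp_intCast_mul_smul (hq : 0 ≤ q) (hc : ∀ n, ‖c n‖ ≤ C * q ^ n.natAbs)
    {z : ℂ} (hz : q * Real.exp |z.re| < 1) :
    AnalyticAt ℂ (fun w => ∑' n : ℤ, Complex.exp (n * w) • c n) z := by
  have hC : 0 ≤ C := (norm_nonneg (c 0)).trans (by simpa using hc 0)
  have hcont : Continuous fun δ => q * Real.exp δ := by fun_prop
  have hnear : ∀ᶠ δ in 𝓝[>] |z.re|, q * Real.exp δ < 1 :=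
    hcont.continuousWithinAt.eventually_lt_const hz
  obtain ⟨δ, hδ, hzδ : |z.re| < δ⟩ := (hnear.and self_mem_nhdsWithin).exists
  have hopen : IsOpen {w : ℂ | |w.re| < δ} := isOpen_lt (by fun_prop) continuous_const
  have hsum : Summable fun n : ℤ => C * (q * Real.exp δ) ^ n.natAbs :=
    (summable_pow_natAbs (by rwa [Real.norm_of_nonneg (by positivity)])).mul_left C
  have hbound (n : ℤ) (w : ℂ) (hw : |w.re| < δ) :
      ‖Complex.exp (n * w) • c n‖ ≤ C * (q * Real.exp δ) ^ n.natAbs :=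
    calc ‖Complex.exp (n * w) • c n‖
      _ ≤ Real.exp |w.re| ^ n.natAbs * (C * q ^ n.natAbs) := by
        rw [norm_smul]
        gcongr
        exacts [norm_cexp_intCast_mul_le n w, hc n]
      _ ≤ Real.exp δ ^ n.natAbs * (C * q ^ n.natAbs) := by gcongr
      _ = C * (q * Real.exp δ) ^ n.natAbs := by ring
  exact (Complex.differentiableOn_tsum_of_summable_norm hsum (fun n => by fun_prop) hopen
    hbound).analyticAt (hopen.mem_nhds hzδ)

lemma analyticAt_tsum_fourier_smul {T : ℝ} (hq : 0 ≤ q) (hq' : q < 1)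
    (hc : ∀ n, ‖c n‖ ≤ C * q ^ n.natAbs) (t : ℝ) :
    AnalyticAt ℝ (fun s : ℝ => ∑' n : ℤ, fourier n (s : AddCircle T) • c n) t := by
  let u : ℝ → ℂ := fun s => 2 * π * Complex.I * s / T
  have hu : AnalyticAt ℝ u t :=
    (analyticAt_const.mul (Complex.ofRealCLM.analyticAt t)).div_const
  have hre : (u t).re = 0 := by simp [u, Complex.div_ofReal_re]
  have hseries : (fun s : ℝ => ∑' n : ℤ, fourier n (s : AddCircle T) • c n) =
      fun s => ∑' n : ℤ, Complex.exp (n * u s) • c n := by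
    funext s
    refine tsum_congr fun n => ?_
    rw [fourier_coe_apply]
    congr 2
    ring
  rw [hseries]
  exact (analyticAt_tsum_cexp_intCast_mul_smul hq hc (z := u t)
    (by simpa [hre] using hq')).restrictScalars.comp (f := u) hu

end FourierSeries

section Poisson

variable {f : ℝ → ℂ}

lemma tsum_comp_sub_intCast_eq_tsum_fourier (hf : Continuous f) (hsupp : HasCompactSupport f)
    (hsum : Summable fun n : ℤ => 𝓕 f n) (t : ℝ) :
    ∑' ℓ : ℤ, f (t - ℓ) = ∑' n : ℤ, fourier n (t : UnitAddCircle) • 𝓕 f n := by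
  have hzero : f =ᶠ[Filter.cocompact ℝ] 0 := by
    rw [← Filter.coclosedCompact_eq_cocompact]
    exact hasCompactSupport_iff_eventuallyEq.mp hsupp
  have hdecay : f =O[Filter.cocompact ℝ] fun x : ℝ => |x| ^ (-2 : ℝ) :=
    hzero.trans_isBigO (Asymptotics.isBigO_zero _ _)
  calc ∑' ℓ : ℤ, f (t - ℓ)
    _ = ∑' ℓ : ℤ, f (t + ℓ) := by
      rw [← (Equiv.neg ℤ).tsum_eq]
      simp [sub_eq_add_neg]
    _ = ∑' n : ℤ, 𝓕 f n * fourier n (t : UnitAddCircle) :=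
      Real.tsum_eq_tsum_fourier_of_rpow_decay_of_summable hf one_lt_two hdecay hsum t
    _ = ∑' n : ℤ, fourier n (t : UnitAddCircle) • 𝓕 f n := by
      simp only [smul_eq_mul, mul_comm]

lemma analyticAt_tsum_comp_sub_intCast (hf : Continuous f) (hsupp : HasCompactSupport f)
    {C q : ℝ} (hq : 0 ≤ q) (hq' : q < 1) (hdecay : ∀ n : ℤ, ‖𝓕 f n‖ ≤ C * q ^ n.natAbs) (t : ℝ) :
    AnalyticAt ℝ (fun s : ℝ => ∑' ℓ : ℤ, f (s - ℓ)) t := by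
  have hsum : Summable fun n : ℤ => 𝓕 f n :=
    .of_norm_bounded ((summable_pow_natAbs (by rwa [Real.norm_of_nonneg hq])).mul_left C) hdecay
  rw [funext (tsum_comp_sub_intCast_eq_tsum_fourier hf hsupp hsum)]
  exact analyticAt_tsum_fourier_smul hq hq' hdecay t

end Poisson

section FourierExt

lemma integrable_mul_of_hasCompactSupport {X R : Type*} [TopologicalSpace X] [T2Space X]
    [MeasurableSpace X] [OpensMeasurableSpace X] [NormedRing R] [SecondCountableTopologyEither X R]
    {μ : Measure X} {f g : X → R} (hf : Integrable f μ) (hsupp : HasCompactSupport f)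
    (hg : Continuous g) : Integrable (fun x => f x * g x) μ := by
  rw [← integrableOn_iff_integrable_of_support_subset
    ((Function.support_mul_subset_left f g).trans (subset_tsupport f))]
  exact hf.integrableOn.mul_continuousOn hg.continuousOn hsupp

variable {φ : ℝ → ℂ}

lemma hasDerivAt_fourierExt (hint : Integrable φ) (hsupp : HasCompactSupport φ) (z : ℂ) :
    HasDerivAt (fourierExt φ) (fourierExt (fun x => -(2 * π * Complex.I * x) * φ x) z) z := by
  let a : ℝ → ℂ := fun x => 2 * π * Complex.I * x
  have ha : Continuous a := by fun_prop
  have hmoment : Integrable fun x => -a x * φ x := by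
    simpa only [mul_comm] using integrable_mul_of_hasCompactSupport hint hsupp ha.fun_neg
  let bound : ℝ → ℝ := fun x => ‖-a x * φ x‖ * Real.exp (‖a x‖ * (‖z‖ + 1))
  have hbound : Integrable bound :=
    integrable_mul_of_hasCompactSupport hmoment.norm hsupp.mul_left.norm (by fun_prop)
  have hF (w : ℂ) : Integrable fun x => φ x * Complex.exp (-(a x * w)) :=
    integrable_mul_of_hasCompactSupport hint hsupp (by fun_prop)
  have hF' : Integrable fun x => -a x * φ x * Complex.exp (-(a x * z)) :=
    integrable_mul_of_hasCompactSupport hmoment hsupp.mul_left (by fun_prop)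
  refine (hasDerivAt_integral_of_dominated_loc_of_deriv_le (bound := bound)
    (F' := fun w x => -a x * φ x * Complex.exp (-(a x * w)))
    (Metric.ball_mem_nhds z one_pos) (.of_forall fun w => (hF w).aestronglyMeasurable) (hF z)
    hF'.aestronglyMeasurable (.of_forall fun x w hw => ?_) hbound
    (.of_forall fun x w _ => ?_)).2
  · have hw' : ‖w‖ ≤ ‖z‖ + 1 := (norm_lt_of_mem_ball hw).le
    calc ‖-a x * φ x * Complex.exp (-(a x * w))‖
      _ = ‖-a x * φ x‖ * ‖Complex.exp (-(a x * w))‖ := norm_mul _ _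
      _ ≤ ‖-a x * φ x‖ * Real.exp ‖-(a x * w)‖ := by
        gcongr
        exact Complex.norm_exp_le_exp_norm _
      _ ≤ ‖-a x * φ x‖ * Real.exp (‖a x‖ * (‖z‖ + 1)) := by
        rw [norm_neg (a x * w), norm_mul (a x) w]
        gcongr
  · exact ((((hasDerivAt_id w).const_mul (a x)).neg.cexp).const_mul (φ x)).congr_deriv
      (by simp only [id, Pi.neg_apply]; ring)

lemma iteratedDeriv_fourierExt (hint : Integrable φ) (hsupp : HasCompactSupport φ) (k : ℕ) :
    iteratedDeriv k (fourierExt φ) =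
      fourierExt fun x => (-(2 * π * Complex.I * x)) ^ k * φ x := by
  induction k with
  | zero => simp
  | succ k ih =>
    have hint' : Integrable fun x : ℝ => (-(2 * π * Complex.I * x)) ^ k * φ x := by
      simpa only [mul_comm] using integrable_mul_of_hasCompactSupport hint hsupp
        (g := fun x : ℝ => (-(2 * π * Complex.I * x)) ^ k) (by fun_prop)
    rw [iteratedDeriv_succ, ih]
    funext z
    rw [(hasDerivAt_fourierExt hint' hsupp.mul_left z).deriv]
    simp only [pow_succ', mul_assoc]

lemma fourierExt_eq_fourier_cexp_mul (φ : ℝ → ℂ) (lam : ℂ) (ξ : ℝ) :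
    fourierExt φ (-(Complex.I * lam) / (2 * π) + ξ) =
      𝓕 (fun x : ℝ => Complex.exp (-lam * x) * φ x) ξ := by
  rw [Real.fourier_real_eq_integral_exp_smul, fourierExt]
  refine integral_congr_ae (.of_forall fun x => ?_)
  have hexp : -(2 * π * Complex.I * x * (-(Complex.I * lam) / (2 * π) + ξ)) =
      ((-2 * π * x * ξ : ℝ) : ℂ) * Complex.I + -lam * x := by
    have hpi : (π : ℂ) ≠ 0 := by exact_mod_cast Real.pi_ne_zero
    push_cast
    field_simp
    linear_combination (x * lam : ℂ) * Complex.I_sq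
  simp only [hexp, Complex.exp_add, smul_eq_mul]
  ring

/-- The function `x ↦ x ^ k * exp (-λ x) * φ x`, whose periodization is `ω_k`. -/
noncomputable def twistedMoment (φ : ℝ → ℂ) (lam : ℂ) (k : ℕ) (x : ℝ) : ℂ :=
  (x : ℂ) ^ k * Complex.exp (-lam * x) * φ x

lemma omegaFun_eq_tsum_twistedMoment (φ : ℝ → ℂ) (lam : ℂ) (k : ℕ) :
    omegaFun φ lam k = fun t => ∑' ℓ : ℤ, twistedMoment φ lam k (t - ℓ) := by
  funext t
  simp only [omegaFun, twistedMoment, Complex.ofReal_sub, Complex.ofReal_intCast]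

lemma continuous_twistedMoment (hφ : Continuous φ) (lam : ℂ) (k : ℕ) :
    Continuous (twistedMoment φ lam k) := by
  unfold twistedMoment
  fun_prop

lemma hasCompactSupport_twistedMoment (hsupp : HasCompactSupport φ) (lam : ℂ) (k : ℕ) :
    HasCompactSupport (twistedMoment φ lam k) :=
  hsupp.mul_left

lemma iteratedDeriv_fourierExt_eq_fourier_twistedMoment (hint : Integrable φ)
    (hsupp : HasCompactSupport φ) (lam : ℂ) (k : ℕ) (ξ : ℝ) :
    iteratedDeriv k (fourierExt φ) (-(Complex.I * lam) / (2 * π) + ξ) =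
      (-(2 * π * Complex.I)) ^ k * 𝓕 (twistedMoment φ lam k) ξ := by
  have hfactor : (fun x : ℝ => Complex.exp (-lam * x) * ((-(2 * π * Complex.I * x)) ^ k * φ x)) =
      (-(2 * π * Complex.I)) ^ k • twistedMoment φ lam k := by
    funext x
    simp only [twistedMoment, Pi.smul_apply, smul_eq_mul]
    ring
  rw [iteratedDeriv_fourierExt hint hsupp, fourierExt_eq_fourier_cexp_mul, hfactor]
  exact congrFun (VectorFourier.fourierIntegral_const_smul _ _ _ _ _) ξ

end FourierExt

section Omega

variable {φ : ℝ → ℂ}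

lemma periodic_omegaFun (φ : ℝ → ℂ) (lam : ℂ) (k : ℕ) :
    Function.Periodic (omegaFun φ lam k) 1 := by
  rw [omegaFun_eq_tsum_twistedMoment]
  exact periodic_tsum_comp_sub_intCast _

lemma analyticAt_omegaFun (hφ : Continuous φ) (hsupp : HasCompactSupport φ) {lam : ℂ} {k : ℕ}
    {C q : ℝ} (hq : 0 ≤ q) (hq' : q < 1)
    (hdecay : ∀ ℓ : ℤ, ‖iteratedDeriv k (fourierExt φ)
      (-(Complex.I * lam) / (2 * π) + ℓ)‖ ≤ C * q ^ ℓ.natAbs) (t : ℝ) :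
    AnalyticAt ℝ (omegaFun φ lam k) t := by
  have hcoeff (n : ℤ) : ‖𝓕 (twistedMoment φ lam k) n‖ ≤ C / (2 * π) ^ k * q ^ n.natAbs := by
    have h := hdecay n
    rw [← Complex.ofReal_intCast, iteratedDeriv_fourierExt_eq_fourier_twistedMoment
      (hφ.integrable_of_hasCompactSupport hsupp) hsupp, norm_mul, norm_pow] at h
    have hnorm : ‖-(2 * π * Complex.I)‖ = 2 * π := by simp [abs_of_pos Real.pi_pos]
    rw [div_mul_eq_mul_div, le_div_iff₀' (by positivity)]
    rwa [hnorm] at h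
  rw [omegaFun_eq_tsum_twistedMoment]
  exact analyticAt_tsum_comp_sub_intCast (continuous_twistedMoment hφ lam k)
    (hasCompactSupport_twistedMoment hsupp lam k) hq hq' hcoeff t

end Omega

section ExponentialPolynomialSums

lemma pow_eq_sum_choose_mul_sub_pow {R : Type*} [CommRing R] (x y : R) (k : ℕ) :
    y ^ k = ∑ j ∈ Finset.range (k + 1),
      (k.choose j : R) * x ^ (k - j) * (-1) ^ j * (x - y) ^ j := by
  calc y ^ k
    _ = (-1 * (x - y) + x) ^ k := by ring
    _ = _ := by
      rw [add_pow]
      refine Finset.sum_congr rfl fun j _ => ?_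
      rw [mul_pow]
      ring

variable {φ : ℝ → ℂ}

lemma tsum_cexp_mul_pow_mul_comp_sub_intCast (hsupp : HasCompactSupport φ) (lam : ℂ) (k : ℕ)
    (t : ℝ) :
    ∑' ℓ : ℤ, Complex.exp (lam * ℓ) * (ℓ : ℂ) ^ k * φ (t - ℓ) =
      Complex.exp (lam * t) * ∑ j ∈ Finset.range (k + 1),
        (k.choose j : ℂ) * (t : ℂ) ^ (k - j) * (-1) ^ j * omegaFun φ lam j t := by
  have hterm (ℓ : ℤ) : Complex.exp (lam * ℓ) * (ℓ : ℂ) ^ k * φ (t - ℓ) =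
      Complex.exp (lam * t) * ∑ j ∈ Finset.range (k + 1),
        (k.choose j : ℂ) * (t : ℂ) ^ (k - j) * (-1) ^ j *
          (((t : ℂ) - ℓ) ^ j * Complex.exp (-lam * (t - ℓ)) * φ (t - ℓ)) := by
    have hexp : Complex.exp (lam * ℓ) = Complex.exp (lam * t) * Complex.exp (-lam * (t - ℓ)) := by
      rw [← Complex.exp_add]
      congr 1
      ring
    rw [hexp, pow_eq_sum_choose_mul_sub_pow (t : ℂ) ℓ k]
    simp only [Finset.mul_sum, Finset.sum_mul]
    exact Finset.sum_congr rfl fun j _ => by ring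
  simp only [hterm, omegaFun, tsum_mul_left]
  rw [Summable.tsum_finsetSum fun j _ => (summable_mul_comp_sub_intCast hsupp _ t).mul_left _]
  simp only [tsum_mul_left]

lemma tsum_mul_eval_mul_comp_sub_intCast {R : Type*} [CommRing R] [TopologicalSpace R]
    [IsTopologicalRing R] [T2Space R] {f : ℝ → R} (hsupp : HasCompactSupport f) (a : ℤ → R)
    (p : Polynomial R) (t : ℝ) :
    ∑' ℓ : ℤ, a ℓ * p.eval (ℓ : R) * f (t - ℓ) = ∑ k ∈ Finset.range (p.natDegree + 1),
      p.coeff k * ∑' ℓ : ℤ, a ℓ * (ℓ : R) ^ k * f (t - ℓ) := by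
  have hsum (k : ℕ) : Summable fun ℓ : ℤ => a ℓ * (ℓ : R) ^ k * f (t - ℓ) :=
    summable_mul_comp_sub_intCast hsupp _ t
  simp only [← (hsum _).tsum_mul_left]
  rw [← Summable.tsum_finsetSum fun k _ => (hsum k).mul_left _]
  refine tsum_congr fun ℓ => ?_
  rw [Polynomial.eval_eq_sum_range, Finset.mul_sum, Finset.sum_mul]
  exact Finset.sum_congr rfl fun k _ => by ring

lemma analyticAt_tsum_cexp_mul_pow (hsupp : HasCompactSupport φ) {lam : ℂ} {k : ℕ} {t : ℝ}
    (homega : ∀ j ≤ k, AnalyticAt ℝ (omegaFun φ lam j) t) :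
    AnalyticAt ℝ (fun s : ℝ =>
      ∑' ℓ : ℤ, Complex.exp (lam * ℓ) * (ℓ : ℂ) ^ k * φ (s - ℓ)) t := by
  have hofReal : AnalyticAt ℝ (fun s : ℝ => (s : ℂ)) t := Complex.ofRealCLM.analyticAt t
  have hexp : AnalyticAt ℝ (fun s : ℝ => Complex.exp (lam * s)) t :=
    analyticAt_cexp.restrictScalars.comp (analyticAt_const.mul hofReal)
  simp only [tsum_cexp_mul_pow_mul_comp_sub_intCast hsupp]
  refine hexp.mul (Finset.analyticAt_fun_sum _ fun j hj => ?_)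
  exact ((analyticAt_const.mul (hofReal.pow _)).mul analyticAt_const).mul
    (homega j (Finset.mem_range_succ_iff.mp hj))

lemma analyticAt_tsum_cexp_mul_eval (hsupp : HasCompactSupport φ) {lam : ℂ} {p : Polynomial ℂ}
    {t : ℝ} (homega : ∀ j ≤ p.natDegree, AnalyticAt ℝ (omegaFun φ lam j) t) :
    AnalyticAt ℝ (fun s : ℝ =>
      ∑' ℓ : ℤ, Complex.exp (lam * ℓ) * p.eval (ℓ : ℂ) * φ (s - ℓ)) t := by
  simp only [tsum_mul_eval_mul_comp_sub_intCast hsupp]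
  refine Finset.analyticAt_fun_sum _ fun k hk => analyticAt_const.mul ?_
  exact analyticAt_tsum_cexp_mul_pow hsupp fun j hj =>
    homega j (hj.trans (Finset.mem_range_succ_iff.mp hk))

end ExponentialPolynomialSums

/-- If the sequences `{φ̂^{(k)}(−iλ/(2π)+ℓ) : ℓ ∈ ℤ}`, `k = 0,…,d`, decay
exponentially, then the functions `ω_k` are 1-periodic analytic,
`Σ_ℓ e^{λℓ}·ℓ^k·φ(t−ℓ) = e^{λt} Σ_{j=0}^k C(k,j)·t^{k−j}·(−1)^j·ω_j(t)`, and for every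
polynomial `p` with `deg p ≤ d` the function `t ↦ Σ_ℓ e^{λℓ}·p(ℓ)·φ(t−ℓ)` is an analytic
member of `V_φ`. -/
theorem stmt_11 (φ : ℝ → ℂ) (hcont : Continuous φ) (hint : Integrable φ)
    (hsupp : HasCompactSupport φ) (lam : ℂ) (d : ℕ)
    (C : ℝ) (hC : 0 < C) (q : ℝ) (hq : q ∈ Set.Ioo (0 : ℝ) 1)
    (hdecay : ∀ k ≤ d, ∀ ℓ : ℤ,
      ‖iteratedDeriv k (fourierExt φ)
          (-(Complex.I * lam) / (2 * (Real.pi : ℂ)) + (ℓ : ℂ))‖ ≤ C * q ^ ℓ.natAbs) :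
    (∀ k ≤ d, (∀ t : ℝ, omegaFun φ lam k (t + 1) = omegaFun φ lam k t) ∧
      (∀ x : ℝ, AnalyticAt ℝ (omegaFun φ lam k) x)) ∧
    (∀ k ≤ d, ∀ t : ℝ,
      ∑' ℓ : ℤ, Complex.exp (lam * (ℓ : ℂ)) * (ℓ : ℂ) ^ k * φ (t - (ℓ : ℝ))
        = Complex.exp (lam * (t : ℂ)) * ∑ j ∈ Finset.range (k + 1),
            (Nat.choose k j : ℂ) * (t : ℂ) ^ (k - j) * (-1) ^ j * omegaFun φ lam j t) ∧
    (∀ p : Polynomial ℂ, p.degree ≤ d →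
      (∀ x : ℝ, AnalyticAt ℝ
        (fun t : ℝ => ∑' ℓ : ℤ, Complex.exp (lam * (ℓ : ℂ)) * p.eval (ℓ : ℂ) * φ (t - (ℓ : ℝ))) x) ∧
      ∃ a : ℤ → ℂ, ∀ t : ℝ,
        (∑' ℓ : ℤ, Complex.exp (lam * (ℓ : ℂ)) * p.eval (ℓ : ℂ) * φ (t - (ℓ : ℝ)))
          = ∑' ℓ : ℤ, a ℓ * φ (t - (ℓ : ℝ))) := by
  have homega (k : ℕ) (hk : k ≤ d) (t : ℝ) : AnalyticAt ℝ (omegaFun φ lam k) t :=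
    analyticAt_omegaFun hcont hsupp hq.1.le hq.2 (hdecay k hk) t
  refine ⟨fun k hk => ⟨periodic_omegaFun φ lam k, homega k hk⟩,
    fun k _ => tsum_cexp_mul_pow_mul_comp_sub_intCast hsupp lam k,
    fun p hp => ⟨fun t => ?_, _, fun _ => rfl⟩⟩
  exact analyticAt_tsum_cexp_mul_eval hsupp fun j hj =>
    homega j (hj.trans (Polynomial.natDegree_le_of_degree_le hp)) t
end
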